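/- Let G be a simple graph. Then G admits an ERR:LD set if and only if every vertex of G has degree at least 2 and G is twin-free. Moreover, in that case S = V(G) is an ERR:LD set. -/

import Mathlib

open scoped symmDiff

variable {V : Type*}

/-- The closed neighborhood `N[v]` of a vertex. -/
def closedNbhd (G : SimpleGraph V) (v : V) : Set V := insert v (G.neighborSet v)

/-- `S` is an error-correcting locating-dominating (ERR:LD) set: conditions (i)-(iv). -/
def IsErrLD (G : SimpleGraph V) (S : Set V) : Prop :=
  (∀ v : V, 3 ≤ (closedNbhd G v ∩ S).encard) ∧
  (∀ v ∈ S, ∀ u ∈ S, u ≠ v →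
    1 ≤ ((((G.neighborSet v ∩ S) ∆ (G.neighborSet u ∩ S)) \ {v, u}).encard)) ∧
  (∀ v ∉ S, ∀ u ∈ S,
    2 ≤ ((((G.neighborSet v ∩ S) ∆ (G.neighborSet u ∩ S)) \ {u}).encard)) ∧
  (∀ v ∉ S, ∀ u ∉ S, u ≠ v →
    3 ≤ (((G.neighborSet v ∩ S) ∆ (G.neighborSet u ∩ S)).encard))

/-- `G` is twin-free: no two distinct vertices `u, v` satisfy `N(u) = N(v)` or
`N[u] = N[v]`. -/
def TwinFree (G : SimpleGraph V) : Prop :=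
  ∀ u v : V, u ≠ v →
    ¬(G.neighborSet u = G.neighborSet v ∨ closedNbhd G u = closedNbhd G v)

theorem errLD_exists_iff (G : SimpleGraph V) :
    ((∃ S : Set V, IsErrLD G S) ↔
      ((∀ v : V, 2 ≤ (G.neighborSet v).encard) ∧ TwinFree G)) ∧
    (((∀ v : V, 2 ≤ (G.neighborSet v).encard) ∧ TwinFree G) →
      IsErrLD G (Set.univ : Set V)) := by
  have key : ((∀ v : V, 2 ≤ (G.neighborSet v).encard) ∧ TwinFree G) →
      IsErrLD G (Set.univ : Set V) := by
    rintro ⟨hd, ht⟩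
    refine ⟨?_, ?_, ?_, ?_⟩
    · intro v
      rw [Set.inter_univ, closedNbhd, Set.encard_insert_of_notMem (by simp)]
      calc (3 : ℕ∞) = 2 + 1 := by norm_num
        _ ≤ _ := by gcongr; exact hd v
    · intro v _ u _ huv
      rw [Set.one_le_encard_iff_nonempty]
      by_contra hne
      rw [Set.not_nonempty_iff_eq_empty] at hne
      have h : ∀ x, x ≠ v → x ≠ u → (G.Adj v x ↔ G.Adj u x) := by
        intro x hxv hxu
        have := Set.ext_iff.1 hne x
        simp [Set.mem_symmDiff, hxv, hxu] at this
        tauto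
      apply ht u v huv
      by_cases ha : G.Adj u v
      · right
        ext x
        simp only [closedNbhd, Set.mem_insert_iff, SimpleGraph.mem_neighborSet]
        have := h x
        have := ha.symm
        by_cases h1 : x = v
        · subst h1; tauto
        · by_cases h2 : x = u
          · subst h2; tauto
          · tauto
      · left
        ext x
        simp only [SimpleGraph.mem_neighborSet]
        have := h x
        have hb : ¬ G.Adj v u := fun hh => ha hh.symm
        by_cases h1 : x = v
        · subst h1; simp [ha]
        · by_cases h2 : x = u
          · subst h2; simp [hb]
          · tauto
    · intro v hv
      exact absurd (Set.mem_univ v) hv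
    · intro v hv
      exact absurd (Set.mem_univ v) hv
  refine ⟨⟨?_, fun h => ⟨_, key h⟩⟩, key⟩
  rintro ⟨S, h1, h2, h3, h4⟩
  refine ⟨?_, ?_⟩
  · intro v
    have h : (3 : ℕ∞) ≤ (G.neighborSet v).encard + 1 :=
      (h1 v).trans ((Set.encard_le_encard Set.inter_subset_left).trans
        (Set.encard_insert_le _ _))
    have h' : (2 : ℕ∞) + 1 ≤ (G.neighborSet v).encard + 1 := by
      refine le_trans (le_of_eq ?_) h
      norm_num
    exact (ENat.add_le_add_iff_right (by simp)).1 h'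
  · intro u v huv htw
    have hx : ∀ x, x ≠ v → x ≠ u → (G.Adj v x ↔ G.Adj u x) := by
      intro x hxv hxu
      rcases htw with h | h
      · have := Set.ext_iff.1 h x
        simp at this
        tauto
      · have := Set.ext_iff.1 h x
        simp [closedNbhd, hxv, hxu] at this
        tauto
    have hD : ∀ x ∈ (G.neighborSet v ∩ S) ∆ (G.neighborSet u ∩ S),
        x ∈ S ∧ (x = v ∨ x = u) := by
      intro x hxD
      have := hx x
      simp only [Set.mem_symmDiff, Set.mem_inter_iff, SimpleGraph.mem_neighborSet] at hxD
      tauto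
    have hD' : ∀ x ∈ (G.neighborSet u ∩ S) ∆ (G.neighborSet v ∩ S),
        x ∈ S ∧ (x = v ∨ x = u) := by
      intro x hxD
      rw [symmDiff_comm] at hxD
      exact hD x hxD
    by_cases hv : v ∈ S <;> by_cases hu : u ∈ S
    · have h := h2 v hv u hu huv
      rw [Set.encard_eq_zero.2] at h
      · simp at h
      · ext x
        have := hD x
        simp only [Set.mem_diff, Set.mem_insert_iff, Set.mem_singleton_iff,
          Set.mem_empty_iff_false]
        tauto
    · have h := h3 u hu v hv
      rw [Set.encard_eq_zero.2] at h
      · simp at h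
      · ext x
        have := hD' x
        have : x = u → x ∉ S := by rintro rfl; exact hu
        simp only [Set.mem_diff, Set.mem_singleton_iff, Set.mem_empty_iff_false]
        tauto
    · have h := h3 v hv u hu
      rw [Set.encard_eq_zero.2] at h
      · simp at h
      · ext x
        have := hD x
        have : x = v → x ∉ S := by rintro rfl; exact hv
        simp only [Set.mem_diff, Set.mem_singleton_iff, Set.mem_empty_iff_false]
        tauto
    · have h := h4 v hv u hu huv
      rw [Set.encard_eq_zero.2] at h
      · simp at h
      · ext x
        have := hD x
        have : x = v → x ∉ S := by rintro rfl; exact hv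
        have : x = u → x ∉ S := by rintro rfl; exact hu
        simp only [Set.mem_empty_iff_false]
        tauto
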